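/- (Simulation Theorem) For every alternating parity tree automaton A over a nonempty finite alphabet Σ there exists a nondeterministic parity tree automaton N over Σ such that L(N) = L(A), i.e. for every tree F : List D → Σ, F ∈ L(N) if and only if F ∈ L(A). -/

import Mathlib

namespace TreeGames

variable {D P O : Type*}

/-- Strict prefix order on tree positions `x < y`. -/
def TLt (x y : List D) : Prop := x <+: y ∧ x ≠ y

/-- The relation `u ⊏ v` on game positions. -/
def Glt (u v : List D × (P ⊕ O)) : Prop :=
  TLt u.1 v.1 ∨ (u.1 = v.1 ∧ (∃ k, u.2 = Sum.inl k) ∧ (∃ l, v.2 = Sum.inr l))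

/-- The relation `u ⊑ v` on game positions. -/
def Gle (u v : List D × (P ⊕ O)) : Prop := Glt u v ∨ u = v

/-- `v` is an immediate successor of `u`. -/
def Gsucc (u v : List D × (P ⊕ O)) : Prop :=
  Glt u v ∧ ¬ ∃ w : List D × (P ⊕ O), Glt u w ∧ Glt w v

/-- The edge relation of the game given by `eP`, `eO`. -/
def Edge (eP : List D × P → Set O) (eO : List D × O → Set (D × P))
    (u v : List D × (P ⊕ O)) : Prop :=
  (∃ x k l, u = (x, Sum.inl k) ∧ v = (x, Sum.inr l) ∧ l ∈ eP (x, k)) ∨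
  (∃ x l d k, u = (x, Sum.inr l) ∧ v = (x ++ [d], Sum.inl k) ∧ (d, k) ∈ eO (x, l))

/-- `U` is an infinite play of the game with edge relation `r` from `u₀`. -/
def IsPlay {α : Type*} (r : α → α → Prop) (u₀ : α) (U : Set α) : Prop :=
  u₀ ∈ U ∧ (∀ v ∈ U, Relation.ReflTransGen r u₀ v) ∧
  (∀ v ∈ U, ∃ w ∈ U, r v w) ∧
  (∀ v ∈ U, ∀ w ∈ U, Relation.TransGen r v w ∨ v = w ∨ Relation.TransGen r w v)

/-- Proponent edge function of the acceptance game `G(A,F)`: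
`eP (x, q) = {(q, C) | C ∈ δ (q, F x)}`. -/
def AccEP {Q A : Type*} (δ : Q × A → Set (Set (D × Q))) (F : List D → A) :
    List D × Q → Set (Q × Set (D × Q)) :=
  fun p => {w : Q × Set (D × Q) | w.1 = p.2 ∧ w.2 ∈ δ (p.2, F p.1)}

/-- Opponent edge function of the acceptance game: `eO (x, (q, C)) = C`. -/
def AccEO {Q : Type*} : List D × (Q × Set (D × Q)) → Set (D × Q) := fun p => p.2.2

/-- Extension of a coloring of states to game positions. -/
def HatC {Q : Type*} (c : Q → ℕ) : List D × (Q ⊕ Q × Set (D × Q)) → ℕ :=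
  fun u => Sum.elim c (fun w => c w.1) u.2

/-- The parity condition on a set `U` of positions of an acceptance game. -/
def Par {Q : Type*} (c : Q → ℕ) (U : Set (List D × (Q ⊕ Q × Set (D × Q)))) : Prop :=
  ∃ m : ℕ, Even m ∧ (∀ u ∈ U, ∃ v ∈ U, Glt u v ∧ HatC c v = m) ∧
    (∃ u ∈ U, ∀ v ∈ U, Glt u v → m ≤ HatC c v)

/-- The parity automaton with transitions `δ`, coloring `c` and initial state `q₀`
accepts the input tree `F` : there is a Proponent strategy in the acceptance game
winning from the root for the parity condition. -/
def Accepts {Q A : Type*} (δ : Q × A → Set (Set (D × Q))) (c : Q → ℕ) (q₀ : Q)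
    (F : List D → A) : Prop :=
  ∃ σ : List D × Q → Q × Set (D × Q),
    (∀ p, σ p ∈ AccEP δ F p) ∧
    ∀ U : Set (List D × (Q ⊕ Q × Set (D × Q))),
      IsPlay (Edge (fun p => ({σ p} : Set (Q × Set (D × Q)))) AccEO)
        ((([] : List D), Sum.inl q₀)) U → Par c U

/-- Well-formedness of an automaton transition function: each `δ (q, a)` is a
nonempty set of nonempty conjunctions. -/
def AutWF {Q A : Type*} (δ : Q × A → Set (Set (D × Q))) : Prop :=
  ∀ q a, (δ (q, a)).Nonempty ∧ ∀ C ∈ δ (q, a), C.Nonempty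

/-- The automaton is nondeterministic: within any conjunction, each direction
determines at most one state. -/
def NonDet {Q A : Type*} (δ : Q × A → Set (Set (D × Q))) : Prop :=
  ∀ q a, ∀ C ∈ δ (q, a), ∀ d : D, ∀ q₁ q₂ : Q, (d, q₁) ∈ C → (d, q₂) ∈ C → q₁ = q₂

/-!
Once Proponent has chosen a conjunction for every state at every node, a direction at a node becomes
a relation on states, and a branch of the tree becomes an infinite word of relations. The choice is
winning iff every path from `q₀` through each of these words satisfies the parity condition. The
simulating automaton guesses the choice and checks every branch with a deterministic parity
automaton for this language `L` of words.

To determinize `L`, map a finite word of relations to its summary: which states can be connected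
by a path through exactly which set of states. Membership of a word in `L` depends only on the
summaries `s, e, e, e, …` of a factorization of it. Such a factorization is found by tracking one
more run of the summary automaton than there are summaries: at each letter two tracked runs agree,
and the one in the larger slot is restarted. Consider the least slot restarted infinitely often. A
merge that recurs in it merges into a run which is eventually permanent, so its restart times
delimit blocks with the same summary `e`. The color is twice the restarted slot, plus one if
`s, e, e, e, …` is rejected.
-/

open Filter Function Set

universe u

/-! ### The parity condition on sequences -/

/-- The min-parity condition: the least number occurring infinitely often in `a` is even. -/
def Parity (a : ℕ → ℕ) : Prop :=
  ∃ m, Even m ∧ (∃ᶠ k in atTop, a k = m) ∧ ∀ᶠ k in atTop, m ≤ a k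

theorem parity_iff_even {a : ℕ → ℕ} {m : ℕ} (hfreq : ∃ᶠ k in atTop, a k = m)
    (hle : ∀ᶠ k in atTop, m ≤ a k) : Parity a ↔ Even m := by
  refine ⟨fun ⟨n, hn, hfreq', hle'⟩ => ?_, fun hm => ⟨m, hm, hfreq, hle⟩⟩
  obtain ⟨i, hi, hni⟩ := (hfreq.and_eventually hle').exists
  obtain ⟨k, hk, hmk⟩ := (hfreq'.and_eventually hle).exists
  rwa [show m = n by omega]

theorem parity_comp_congr {α : Type*} (c : α → ℕ) {p p' : ℕ → α}
    (h : map p atTop = map p' atTop) : Parity (c ∘ p) ↔ Parity (c ∘ p') := by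
  have hfreq (m : ℕ) : (∃ᶠ k in atTop, c (p k) = m) ↔ ∃ᶠ k in atTop, c (p' k) = m := by
    simpa only [frequently_map] using
      iff_of_eq (congrArg (fun l => ∃ᶠ x in l, c x = m) h)
  have hev (m : ℕ) : (∀ᶠ k in atTop, m ≤ c (p k)) ↔ ∀ᶠ k in atTop, m ≤ c (p' k) := by
    simpa only [eventually_map] using
      iff_of_eq (congrArg (fun l => ∀ᶠ x in l, m ≤ c x) h)
  simp only [Parity, comp_apply, hfreq, hev]

theorem parity_comp_div_two (a : ℕ → ℕ) : Parity (fun n => a (n / 2)) ↔ Parity a :=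
  parity_comp_congr a (p' := id) (by rw [map_div_atTop_eq_nat 2 two_pos, map_id])

theorem parity_comp_succ (a : ℕ → ℕ) : Parity (fun n => a (n + 1)) ↔ Parity a :=
  parity_comp_congr a (p' := id) (by rw [map_add_atTop_eq_nat, map_id])

theorem exists_frequently_eq_eventually_le {E R : Type*} [Finite E] [LinearOrder R]
    (ev : ℕ → E) (c : E → R) :
    ∃ ε, (∃ᶠ k in atTop, ev k = ε) ∧ ∀ᶠ k in atTop, c ε ≤ c (ev k) := by
  let recurrent : Set E := {ε | ∃ᶠ k in atTop, ev k = ε}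
  have hrec : ∀ᶠ k in atTop, ev k ∈ recurrent := by
    have : ∀ᶠ k in atTop, ∀ ε, ε ∉ recurrent → ev k ≠ ε :=
      eventually_all.2 fun ε => eventually_imp_distrib_left.2 not_frequently.1
    exact this.mono fun k hk => by_contra fun h => hk _ h rfl
  obtain ⟨k, hk⟩ := hrec.exists
  obtain ⟨ε, hε, hmin⟩ := exists_min_image recurrent c (toFinite _) ⟨_, hk⟩
  exact ⟨ε, hε, hrec.mono fun k hk => hmin _ hk⟩

/-! ### Runs on infinite words -/

section Run

variable {S A : Type*}

/-- The state reached by the transition function `f` from `s₀` after the first `k` letters of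
`w`. -/
def run (f : S → A → S) (s₀ : S) (w : ℕ → A) : ℕ → S
  | 0 => s₀
  | k + 1 => f (run f s₀ w k) (w k)

/-- The state reached from `s₀` after reading the letters `w i, …, w (k - 1)`; it is `s₀` when
`k ≤ i`. -/
def runFrom (f : S → A → S) (s₀ : S) (w : ℕ → A) (i k : ℕ) : S :=
  run f s₀ (fun n => w (i + n)) (k - i)

/-- The infinite word `w` splits into finite words of which the first leads `f` from `s₀` to `s`
and every other one leads `f` from `s₀` to `e`. The `n`-th block is `[j n, j (n + 1))`. -/
def HasFactorization (f : S → A → S) (s₀ : S) (w : ℕ → A) (s e : S) : Prop :=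
  ∃ j : ℕ → ℕ, StrictMono j ∧ j 0 = 0 ∧ runFrom f s₀ w (j 0) (j 1) = s ∧
    ∀ n, runFrom f s₀ w (j (n + 1)) (j (n + 2)) = e

variable (f : S → A → S) (s₀ : S) (w : ℕ → A)

theorem runFrom_self (i : ℕ) : runFrom f s₀ w i i = s₀ := by
  simp only [runFrom, Nat.sub_self, run]

theorem runFrom_succ {i k : ℕ} (h : i ≤ k) :
    runFrom f s₀ w i (k + 1) = f (runFrom f s₀ w i k) (w k) := by
  simp only [runFrom, Nat.succ_sub h, run, Nat.add_sub_cancel' h]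

variable {f s₀ w}

theorem runFrom_eq_of_le {i i' k n : ℕ} (hi : i ≤ k) (hi' : i' ≤ k)
    (h : runFrom f s₀ w i k = runFrom f s₀ w i' k) (hn : k ≤ n) :
    runFrom f s₀ w i n = runFrom f s₀ w i' n := by
  induction n, hn using Nat.le_induction with
  | base => exact h
  | succ n hn ih => rw [runFrom_succ _ _ _ (hi.trans hn), runFrom_succ _ _ _ (hi'.trans hn), ih]

end Run

/-- A deterministic parity automaton on infinite words over `A`, with states `Y`. -/
structure DetParityAutomaton (A Y : Type*) where
  start : Y
  step : Y → A → Y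
  color : Y → ℕ

/-- The set of infinite words whose run satisfies the parity condition. -/
def DetParityAutomaton.language {A Y : Type*} (M : DetParityAutomaton A Y) : Set (ℕ → A) :=
  {w | Parity fun k => M.color (run M.step M.start w k)}

/-! ### Determinization by merging runs -/

/-- Names for runs tracked simultaneously: one more than there are states, so that two of the
runs always agree. -/
abbrev Slot (S : Type*) : Type := Fin (Nat.card S + 1)

theorem exists_collision {S : Type*} [Finite S] (v : Slot S → S) :
    ∃ p : Slot S × Slot S, p.1 < p.2 ∧ v p.1 = v p.2 := by
  have hv : ¬ Injective v := fun hinj => by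
    simpa using Nat.card_le_card_of_injective v hinj
  obtain ⟨t, t', heq, hne⟩ := not_injective_iff.1 hv
  rcases hne.lt_or_gt with hlt | hlt
  · exact ⟨(t, t'), hlt, heq⟩
  · exact ⟨(t', t), hlt, heq.symm⟩

/-- A chosen pair of distinct slots with equal values, the smaller slot first. -/
noncomputable def collision {S : Type*} [Finite S] (v : Slot S → S) : Slot S × Slot S :=
  (exists_collision v).choose

theorem collision_lt {S : Type*} [Finite S] (v : Slot S → S) :
    (collision v).1 < (collision v).2 :=
  (exists_collision v).choose_spec.1

theorem apply_collision {S : Type*} [Finite S] (v : Slot S → S) :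
    v (collision v).1 = v (collision v).2 :=
  (exists_collision v).choose_spec.2

/-- The record of one merge: the run in slot `restarted` has met the run in the smaller slot
`survivor`. When the former was started, the run in slot `0` was in state `initial` and the run in
slot `survivor` was in state `block`. -/
@[ext]
structure MergeEvent (S : Type*) where
  survivor : Slot S
  restarted : Slot S
  initial : S
  block : S

/-- A state of the merging machine: the current states of the tracked runs, for each slot the
states of all runs at the moment when that slot was last restarted, and the latest merge. -/
@[ext]
structure MergeState (S : Type*) where
  value : Slot S → S
  snapshot : Slot S → Slot S → S
  event : MergeEvent S

instance {S : Type*} [Finite S] : Finite (MergeEvent S) :=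
  Finite.of_injective (fun ε => (ε.survivor, ε.restarted, ε.initial, ε.block)) fun ε ε' h => by
    simpa only [MergeEvent.ext_iff, Prod.mk.injEq] using h

instance {S : Type*} [Finite S] : Finite (MergeState S) :=
  Finite.of_injective (fun x => (x.value, x.snapshot, x.event)) fun x x' h => by
    simpa only [MergeState.ext_iff, Prod.mk.injEq] using h

namespace MergeState

variable {S A : Type*}

/-- All runs start in `s₀`; the event is a placeholder. -/
noncomputable def start (s₀ : S) : MergeState S :=
  ⟨fun _ => s₀, fun _ _ => s₀, ⟨0, 0, s₀, s₀⟩⟩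

variable [Finite S] (f : S → A → S) (s₀ : S) (w : ℕ → A)

/-- Advance all runs by one letter, then restart the larger slot of a collision from `s₀`. -/
noncomputable def step (x : MergeState S) (a : A) : MergeState S :=
  let moved : Slot S → S := fun t => f (x.value t) a
  let c := collision moved
  let value := update moved c.2 s₀
  ⟨value, update x.snapshot c.2 value, ⟨c.1, c.2, x.snapshot c.2 0, x.snapshot c.2 c.1⟩⟩

/-- The state of the merging machine after `k` letters of `w`. -/
noncomputable def trace (k : ℕ) : MergeState S :=
  run (step f s₀) (start s₀) w k

/-- The merge performed when the letter `w k` is read. -/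
noncomputable def mergeAt (k : ℕ) : MergeEvent S :=
  (trace f s₀ w (k + 1)).event

/-- The time at which the run in slot `t` at time `k` was started. -/
noncomputable def origin : ℕ → Slot S → ℕ
  | 0 => fun _ => 0
  | k + 1 => update (origin k) (mergeAt f s₀ w k).restarted (k + 1)

theorem survivor_lt_restarted (k : ℕ) :
    (mergeAt f s₀ w k).survivor < (mergeAt f s₀ w k).restarted :=
  collision_lt _

theorem origin_le (k : ℕ) (t : Slot S) : origin f s₀ w k t ≤ k := by
  induction k with
  | zero => exact le_rfl
  | succ k ih =>
    rw [origin, update_apply]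
    split_ifs
    exacts [le_rfl, ih.trans k.le_succ]

theorem origin_mono (t : Slot S) : Monotone fun k => origin f s₀ w k t := by
  refine monotone_nat_of_le_succ fun k => ?_
  rw [origin, update_apply]
  split_ifs
  exacts [(origin_le f s₀ w k t).trans k.le_succ, le_rfl]

theorem origin_zero (k : ℕ) : origin f s₀ w k 0 = 0 := by
  induction k with
  | zero => rfl
  | succ k ih =>
    rw [origin, update_of_ne ((Fin.zero_le _).trans_lt (survivor_lt_restarted f s₀ w k)).ne, ih]

variable {f s₀ w}

theorem lt_origin_restarted {k n : ℕ} (h : k < n) :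
    k < origin f s₀ w n (mergeAt f s₀ w k).restarted :=
  calc k < origin f s₀ w (k + 1) (mergeAt f s₀ w k).restarted := by
        rw [origin, update_self]; exact k.lt_succ_self
    _ ≤ _ := origin_mono f s₀ w _ h

theorem origin_eq_of_not_restarted {t : Slot S} {K k : ℕ}
    (h : ∀ n ≥ K, (mergeAt f s₀ w n).restarted ≠ t) (hk : K ≤ k) :
    origin f s₀ w k t = origin f s₀ w K t := by
  induction k, hk using Nat.le_induction with
  | base => rfl
  | succ k hk ih => rw [origin, update_of_ne (h k hk).symm, ih]

variable (f s₀ w)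

theorem trace_value (k : ℕ) (t : Slot S) :
    (trace f s₀ w k).value t = runFrom f s₀ w (origin f s₀ w k t) k := by
  induction k with
  | zero => rfl
  | succ k ih =>
    change update (fun t => f ((trace f s₀ w k).value t) (w k)) (mergeAt f s₀ w k).restarted s₀ t =
      runFrom f s₀ w (update (origin f s₀ w k) (mergeAt f s₀ w k).restarted (k + 1) t) (k + 1)
    rw [update_apply, update_apply]
    split_ifs
    · rw [runFrom_self]
    · rw [ih, runFrom_succ _ _ _ (origin_le f s₀ w k t)]

theorem trace_snapshot (k : ℕ) (t : Slot S) :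
    (trace f s₀ w k).snapshot t = (trace f s₀ w (origin f s₀ w k t)).value := by
  induction k with
  | zero => rfl
  | succ k ih =>
    change update (trace f s₀ w k).snapshot (mergeAt f s₀ w k).restarted
        (trace f s₀ w (k + 1)).value t =
      (trace f s₀ w (update (origin f s₀ w k) (mergeAt f s₀ w k).restarted (k + 1) t)).value
    rw [update_apply, update_apply]
    split_ifs
    exacts [rfl, ih]

theorem snapshot_eq_runFrom (k : ℕ) (t r : Slot S) :
    (trace f s₀ w k).snapshot t r =
      runFrom f s₀ w (origin f s₀ w (origin f s₀ w k t) r) (origin f s₀ w k t) := by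
  rw [trace_snapshot, trace_value]

theorem mergeAt_initial (k : ℕ) : (mergeAt f s₀ w k).initial =
    runFrom f s₀ w 0 (origin f s₀ w k (mergeAt f s₀ w k).restarted) := by
  have h := snapshot_eq_runFrom f s₀ w k (mergeAt f s₀ w k).restarted 0
  rwa [origin_zero] at h

theorem mergeAt_block (k : ℕ) : (mergeAt f s₀ w k).block =
    runFrom f s₀ w
      (origin f s₀ w (origin f s₀ w k (mergeAt f s₀ w k).restarted) (mergeAt f s₀ w k).survivor)
      (origin f s₀ w k (mergeAt f s₀ w k).restarted) :=
  snapshot_eq_runFrom f s₀ w k _ _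

theorem runFrom_origin_survivor (k : ℕ) :
    runFrom f s₀ w (origin f s₀ w k (mergeAt f s₀ w k).survivor) (k + 1) =
      runFrom f s₀ w (origin f s₀ w k (mergeAt f s₀ w k).restarted) (k + 1) := by
  have h : f ((trace f s₀ w k).value (mergeAt f s₀ w k).survivor) (w k) =
      f ((trace f s₀ w k).value (mergeAt f s₀ w k).restarted) (w k) :=
    apply_collision fun t => f ((trace f s₀ w k).value t) (w k)
  rwa [trace_value, trace_value, ← runFrom_succ f s₀ w (origin_le f s₀ w k _),
    ← runFrom_succ f s₀ w (origin_le f s₀ w k _)] at h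

variable {f s₀ w}

theorem hasFactorization_of_frequently_mergeAt {ε : MergeEvent S}
    (hfreq : ∃ᶠ k in atTop, mergeAt f s₀ w k = ε)
    (hsurv : ∀ᶠ k in atTop, (mergeAt f s₀ w k).restarted ≠ ε.survivor) :
    HasFactorization f s₀ w ε.initial ε.block := by
  obtain ⟨K, hK⟩ := eventually_atTop.1 hsurv
  obtain ⟨κ, hκ, hκε⟩ :=
    extraction_of_frequently_atTop (hfreq.and_eventually (eventually_ge_atTop K))
  choose hε hKκ using hκε
  -- The block boundaries `J n` are the times at which the runs merged by `ε` were started: by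
  -- time `J (n + 1)`, the run started at `J n` has joined the permanent run in slot `ε.survivor`.
  let J (n : ℕ) : ℕ := origin f s₀ w (κ (n + 1)) ε.restarted
  have hJ_le (n : ℕ) : J n ≤ κ (n + 1) := origin_le f s₀ w _ _
  have hlt_J (n : ℕ) : κ n < J n := by
    simpa only [hε n] using lt_origin_restarted (f := f) (s₀ := s₀) (w := w) (hκ n.lt_succ_self)
  have hsurvivor {k : ℕ} (hk : K ≤ k) :
      origin f s₀ w k ε.survivor = origin f s₀ w K ε.survivor :=
    origin_eq_of_not_restarted hK hk
  have hmerge (n : ℕ) : runFrom f s₀ w (J n) (κ (n + 1) + 1) =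
      runFrom f s₀ w (origin f s₀ w K ε.survivor) (κ (n + 1) + 1) := by
    have h := runFrom_origin_survivor f s₀ w (κ (n + 1))
    rw [hε, hsurvivor (hKκ _)] at h
    exact h.symm
  have hinitial : runFrom f s₀ w 0 (J 0) = ε.initial := by
    have h := mergeAt_initial f s₀ w (κ 1)
    rw [hε] at h
    exact h.symm
  have hblock (n : ℕ) : runFrom f s₀ w (J n) (J (n + 1)) = ε.block := by
    have h := mergeAt_block f s₀ w (κ (n + 2))
    rw [hε, hsurvivor ((hKκ (n + 1)).trans (hlt_J (n + 1)).le)] at h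
    rw [h]
    refine runFrom_eq_of_le ((hJ_le n).trans (Nat.le_succ _)) ?_ (hmerge n) (hlt_J (n + 1))
    exact (origin_le f s₀ w _ _).trans ((hKκ _).trans (Nat.le_succ _))
  refine ⟨fun n => n.casesOn 0 J, strictMono_nat_of_lt_succ fun n => ?_, rfl, hinitial, hblock⟩
  cases n with
  | zero => exact (Nat.zero_le _).trans_lt (hlt_J 0)
  | succ n => exact (hJ_le n).trans_lt (hlt_J (n + 1))

end MergeState

namespace MergeEvent

variable {S : Type*}

open Classical in
/-- The color of a merge when `good s e` says that words factoring as `s e e e …` are to be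
accepted: smaller restarted slots take precedence. -/
noncomputable def color (good : S → S → Prop) (ε : MergeEvent S) : ℕ :=
  2 * ε.restarted + if good ε.initial ε.block then 0 else 1

theorem even_color_iff (good : S → S → Prop) (ε : MergeEvent S) :
    Even (ε.color good) ↔ good ε.initial ε.block := by
  rw [color]
  split_ifs with h <;> simp [h, parity_simps]

theorem restarted_le_of_color_le {good : S → S → Prop} {ε ε' : MergeEvent S}
    (h : ε.color good ≤ ε'.color good) : ε.restarted ≤ ε'.restarted := by
  rw [color, color] at h
  rw [Fin.le_def]
  split_ifs at h <;> omega

end MergeEvent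

open MergeState in
theorem exists_detParityAutomaton {S : Type u} {A : Type*} [Finite S] (f : S → A → S) (s₀ : S)
    {L : Set (ℕ → A)} (hL : ∀ s e w w', HasFactorization f s₀ w s e →
      HasFactorization f s₀ w' s e → w ∈ L → w' ∈ L) :
    ∃ (Y : Type u) (_ : Finite Y) (M : DetParityAutomaton A Y), M.language = L := by
  let good (s e : S) : Prop := ∃ w ∈ L, HasFactorization f s₀ w s e
  let M : DetParityAutomaton A (MergeState S) :=
    ⟨start s₀, MergeState.step f s₀, fun x => x.event.color good⟩
  refine ⟨MergeState S, inferInstance, M, Set.ext fun w => ?_⟩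
  obtain ⟨ε, hfreq, hmin⟩ :=
    exists_frequently_eq_eventually_le (mergeAt f s₀ w) (MergeEvent.color good)
  have hsurv : ∀ᶠ k in atTop, (mergeAt f s₀ w k).restarted ≠ ε.survivor := by
    obtain ⟨k, rfl⟩ := hfreq.exists
    exact hmin.mono fun n hn =>
      ((survivor_lt_restarted f s₀ w k).trans_le (MergeEvent.restarted_le_of_color_le hn)).ne'
  have hfact := hasFactorization_of_frequently_mergeAt hfreq hsurv
  calc w ∈ M.language
      ↔ Parity fun k => (mergeAt f s₀ w k).color good := (parity_comp_succ _).symm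
    _ ↔ Even (ε.color good) := parity_iff_even (hfreq.mono fun _ => congrArg _) hmin
    _ ↔ good ε.initial ε.block := ε.even_color_iff good
    _ ↔ w ∈ L := ⟨fun ⟨_, hw', hfact'⟩ => hL _ _ _ _ hfact' hfact hw', fun hw => ⟨w, hw, hfact⟩⟩

/-! ### Paths through a word of relations -/

theorem exists_mem_Ico_of_strictMono {j : ℕ → ℕ} (hj : StrictMono j) (hj0 : j 0 = 0) (l : ℕ) :
    ∃ n, l ∈ Ico (j n) (j (n + 1)) := by
  have hcover := iUnion_Ico_map_succ_eq_Ici (f := j) (fun n => hj.monotone bot_le)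
    hj.not_bddAbove_range_of_wellFoundedLT
  have hl : l ∈ Ici (j ⊥) := by simp [hj0]
  rw [← hcover] at hl
  simpa using hl

theorem exists_glue {α : Type*} {j : ℕ → ℕ} (hj : StrictMono j) (hj0 : j 0 = 0)
    {h : ℕ → ℕ → α} (hglue : ∀ n, h n (j (n + 1)) = h (n + 1) (j (n + 1))) :
    ∃ p : ℕ → α, ∀ n, EqOn p (h n) (Icc (j n) (j (n + 1))) := by
  choose N hN using exists_mem_Ico_of_strictMono hj hj0
  have hN_eq {n l : ℕ} (hl : l ∈ Ico (j n) (j (n + 1))) : N l = n :=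
    hj.monotone.pairwise_disjoint_on_Ico_succ.eq (not_disjoint_iff.2 ⟨l, hN l, hl⟩)
  refine ⟨fun l => h (N l) l, fun n l hl => ?_⟩
  rcases hl.2.eq_or_lt with rfl | hlt
  · simp only [hN_eq (left_mem_Ico.2 (hj (n + 1).lt_succ_self)), hglue]
  · simp only [hN_eq ⟨hl.1, hlt⟩]

theorem map_atTop_le_of_image_Ioc_subset {α : Type*} {p p' : ℕ → α} {j j' : ℕ → ℕ}
    (hj : StrictMono j) (hj0 : j 0 = 0) (hj' : StrictMono j')
    (h : ∀ n, p '' Ioc (j n) (j (n + 1)) ⊆ p' '' Ioc (j' n) (j' (n + 1))) :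
    map p atTop ≤ map p' atTop := by
  intro s hs
  obtain ⟨n, hn⟩ := mem_atTop_sets.1 (mem_map.1 hs)
  refine mem_map.2 (mem_atTop_sets.2 ⟨j n + 1, fun l hl => ?_⟩)
  obtain ⟨i, hi⟩ := exists_mem_Ico_of_strictMono hj hj0 (l - 1)
  obtain ⟨l', hl', hpl⟩ := h i (mem_image_of_mem p (show l ∈ Ioc _ _ from
    ⟨by have := hi.1; omega, by have := hi.2; omega⟩))
  have hni : n < i + 1 := hj.lt_iff_lt.1 (by have := hi.2; omega)
  have hnl' : n ≤ l' := (Nat.le_of_lt_succ hni).trans ((hj'.id_le i).trans hl'.1.le)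
  rw [mem_preimage, ← hpl]
  exact hn l' hnl'

section Paths

variable {Q : Type*}

/-- The words of relations on `Q` all of whose infinite paths from `q₀` satisfy the parity
condition. -/
def allPathsParity (c : Q → ℕ) (q₀ : Q) : Set (ℕ → Q → Q → Prop) :=
  {w | ∀ p : ℕ → Q, p 0 = q₀ → (∀ k, w k (p k) (p (k + 1))) → Parity (c ∘ p)}

/-- What a finite word of relations reveals about its paths: the triples `(q, V, q')` such that
some path leads from `q` to `q'` and visits exactly the states in `V` after its start. -/
abbrev PathSummary (Q : Type*) : Type _ := Set (Q × Set Q × Q)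

namespace PathSummary

/-- The summary of the empty word. -/
def nil : PathSummary Q := {z | z.2.1 = ∅ ∧ z.1 = z.2.2}

/-- The summary of a word extended by the relation `r`. -/
def snoc (s : PathSummary Q) (r : Q → Q → Prop) : PathSummary Q :=
  {z | ∃ V q', (z.1, V, q') ∈ s ∧ r q' z.2.2 ∧ z.2.1 = insert z.2.2 V}

theorem image_Ioc_succ (p : ℕ → Q) {i k : ℕ} (h : i ≤ k) :
    p '' Ioc i (k + 1) = insert (p (k + 1)) (p '' Ioc i k) := by
  rw [← insert_Ioc_right_eq_Ioc_add_one h, image_insert_eq]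

theorem mem_runFrom_iff (w : ℕ → Q → Q → Prop) {i k : ℕ} (hik : i ≤ k) (q q' : Q) (V : Set Q) :
    (q, V, q') ∈ runFrom snoc nil w i k ↔
      ∃ p : ℕ → Q, p i = q ∧ p k = q' ∧ (∀ l ∈ Ico i k, w l (p l) (p (l + 1))) ∧
        V = p '' Ioc i k := by
  induction k, hik using Nat.le_induction generalizing q' V with
  | base =>
    simp only [runFrom_self, Ico_self, Ioc_self, image_empty, mem_empty_iff_false]
    constructor
    · rintro ⟨rfl : V = ∅, rfl : q = q'⟩
      exact ⟨fun _ => q, rfl, rfl, nofun, rfl⟩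
    · rintro ⟨p, rfl, rfl, -, rfl⟩
      exact ⟨rfl, rfl⟩
  | succ k hik ih =>
    rw [runFrom_succ _ _ _ hik]
    constructor
    · rintro ⟨V', q'', hmem, hr, rfl : V = insert q' V'⟩
      obtain ⟨p, rfl, rfl, hpath, rfl⟩ := (ih _ _).1 hmem
      have hagree : EqOn (update p (k + 1) q') p (Iic k) := fun l hl =>
        update_of_ne (Nat.lt_succ_of_le hl).ne _ _
      refine ⟨update p (k + 1) q', hagree hik, update_self .., fun l hl => ?_, ?_⟩
      · rcases (Nat.le_of_lt_succ hl.2).eq_or_lt with rfl | hlt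
        · rwa [hagree self_mem_Iic, update_self]
        · rw [hagree hlt.le, hagree (show l + 1 ≤ k from hlt)]
          exact hpath l ⟨hl.1, hlt⟩
      · rw [image_Ioc_succ _ hik, update_self, (hagree.mono fun l hl => hl.2).image_eq]
    · rintro ⟨p, rfl, rfl, hpath, rfl⟩
      refine ⟨p '' Ioc i k, p k, (ih _ _).2 ⟨p, rfl, rfl, fun l hl => ?_, rfl⟩, ?_, ?_⟩
      · exact hpath l ⟨hl.1, hl.2.trans k.lt_succ_self⟩
      · exact hpath k ⟨hik, k.lt_succ_self⟩
      · exact image_Ioc_succ p hik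

theorem exists_path_of_runFrom_eq {w w' : ℕ → Q → Q → Prop} {j j' : ℕ → ℕ} (hj : StrictMono j)
    (hj0 : j 0 = 0) (hj' : StrictMono j') (hj0' : j' 0 = 0)
    (hsumm : ∀ n, runFrom snoc nil w (j n) (j (n + 1)) = runFrom snoc nil w' (j' n) (j' (n + 1)))
    {p' : ℕ → Q} (hp' : ∀ k, w' k (p' k) (p' (k + 1))) :
    ∃ p : ℕ → Q, p 0 = p' 0 ∧ (∀ k, w k (p k) (p (k + 1))) ∧
      ∀ n, p '' Ioc (j n) (j (n + 1)) = p' '' Ioc (j' n) (j' (n + 1)) := by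
  have hblock (n : ℕ) : ∃ h : ℕ → Q, h (j n) = p' (j' n) ∧ h (j (n + 1)) = p' (j' (n + 1)) ∧
      (∀ l ∈ Ico (j n) (j (n + 1)), w l (h l) (h (l + 1))) ∧
      p' '' Ioc (j' n) (j' (n + 1)) = h '' Ioc (j n) (j (n + 1)) := by
    rw [← mem_runFrom_iff w (hj n.lt_succ_self).le, hsumm,
      mem_runFrom_iff w' (hj' n.lt_succ_self).le]
    exact ⟨p', rfl, rfl, fun l _ => hp' l, rfl⟩
  choose h hstart hend hpath himage using hblock
  obtain ⟨p, hp⟩ := exists_glue hj hj0 fun n => (hend n).trans (hstart (n + 1)).symm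
  refine ⟨p, ?_, fun k => ?_, fun n => ?_⟩
  · have hp0 : p 0 = h 0 0 := hp 0 ⟨hj0.le, Nat.zero_le _⟩
    have hstart0 := hstart 0
    rw [hj0, hj0'] at hstart0
    exact hp0.trans hstart0
  · obtain ⟨n, hn⟩ := exists_mem_Ico_of_strictMono hj hj0 k
    rw [hp n (Ico_subset_Icc_self hn), hp n ⟨hn.1.trans k.le_succ, hn.2⟩]
    exact hpath n k hn
  · rw [himage, ((hp n).mono Ioc_subset_Icc_self).image_eq]

end PathSummary

open PathSummary in
theorem mem_allPathsParity_of_hasFactorization (c : Q → ℕ) (q₀ : Q) {w w' : ℕ → Q → Q → Prop}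
    {s e : PathSummary Q} (hw : HasFactorization snoc nil w s e)
    (hw' : HasFactorization snoc nil w' s e) (hgood : w ∈ allPathsParity c q₀) :
    w' ∈ allPathsParity c q₀ := by
  obtain ⟨j, hj, hj0, hs, he⟩ := hw
  obtain ⟨j', hj', hj0', hs', he'⟩ := hw'
  intro p' hp0' hp'
  have hsumm (n : ℕ) :
      runFrom snoc nil w (j n) (j (n + 1)) = runFrom snoc nil w' (j' n) (j' (n + 1)) := by
    cases n with
    | zero => exact hs.trans hs'.symm
    | succ n => exact (he n).trans (he' n).symm
  obtain ⟨p, hp0, hp, himage⟩ := exists_path_of_runFrom_eq hj hj0 hj' hj0' hsumm hp'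
  have hmap : map p atTop = map p' atTop :=
    le_antisymm (map_atTop_le_of_image_Ioc_subset hj hj0 hj' fun n => (himage n).subset)
      (map_atTop_le_of_image_Ioc_subset hj' hj0' hj fun n => (himage n).superset)
  exact (parity_comp_congr c hmap).1 (hgood p (hp0.trans hp0') hp)

end Paths

theorem exists_detParityAutomaton_allPathsParity {Q : Type u} [Finite Q] (c : Q → ℕ) (q₀ : Q) :
    ∃ (Y : Type u) (_ : Finite Y) (M : DetParityAutomaton (Q → Q → Prop) Y),
      M.language = allPathsParity c q₀ :=
  exists_detParityAutomaton PathSummary.snoc PathSummary.nil fun _ _ _ _ =>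
    mem_allPathsParity_of_hasFactorization c q₀

/-! ### Plays as sequences -/

section Plays

variable {eP : List D × P → Set O} {eO : List D × O → Set (D × P)}

theorem edge_inl_iff {x : List D} {k : P} {v : List D × (P ⊕ O)} :
    Edge eP eO (x, Sum.inl k) v ↔ ∃ l ∈ eP (x, k), v = (x, Sum.inr l) := by
  constructor
  · rintro (⟨x, k, l, ⟨⟩, rfl, hl⟩ | ⟨x, l, d, k, ⟨⟩, -⟩)
    exact ⟨l, hl, rfl⟩
  · rintro ⟨l, hl, rfl⟩
    exact Or.inl ⟨x, k, l, rfl, rfl, hl⟩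

theorem edge_inr_iff {x : List D} {l : O} {v : List D × (P ⊕ O)} :
    Edge eP eO (x, Sum.inr l) v ↔ ∃ d k, (d, k) ∈ eO (x, l) ∧ v = (x ++ [d], Sum.inl k) := by
  constructor
  · rintro (⟨x, k, l, ⟨⟩, -⟩ | ⟨x, l, d, k, ⟨⟩, rfl, hdk⟩)
    exact ⟨d, k, hdk, rfl⟩
  · rintro ⟨d, k, hdk, rfl⟩
    exact Or.inr ⟨x, l, d, k, rfl, rfl, hdk⟩

/-- The number of moves that lead from the root to a game position. -/
def depth (u : List D × (P ⊕ O)) : ℕ :=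
  2 * u.1.length + Sum.elim (fun _ => 0) (fun _ => 1) u.2

theorem depth_lt_of_glt {u v : List D × (P ⊕ O)} (h : Glt u v) : depth u < depth v := by
  obtain ⟨x, a⟩ := u
  obtain ⟨y, b⟩ := v
  rcases h with ⟨hpre, hne⟩ | ⟨rfl : x = y, ⟨k, rfl : a = _⟩, ⟨l, rfl : b = _⟩⟩
  · have hlen : x.length < y.length :=
      hpre.length_le.lt_of_ne fun h => hne (hpre.eq_of_length h)
    cases a <;> cases b <;> simp only [depth, Sum.elim_inl, Sum.elim_inr] <;> omega
  · simp [depth]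

theorem Edge.depth_eq {u v : List D × (P ⊕ O)} (h : Edge eP eO u v) : depth v = depth u + 1 := by
  rcases h with ⟨x, k, l, rfl, rfl, -⟩ | ⟨x, l, d, k, rfl, rfl, -⟩
  · simp [depth]
  · simp [depth, mul_add]

theorem Edge.glt {u v : List D × (P ⊕ O)} (h : Edge eP eO u v) : Glt u v := by
  rcases h with ⟨x, k, l, rfl, rfl, -⟩ | ⟨x, l, d, k, rfl, rfl, -⟩
  · exact Or.inr ⟨rfl, ⟨k, rfl⟩, ⟨l, rfl⟩⟩
  · exact Or.inl ⟨List.prefix_append x [d], by simp⟩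

instance : IsTrans (List D × (P ⊕ O)) Glt where
  trans := by
    rintro ⟨x, a⟩ ⟨y, b⟩ ⟨z, c⟩ (hxy | ⟨hxy : x = y, ha, -⟩) (hyz | ⟨hyz : y = z, -, hc⟩)
    · exact Or.inl ⟨hxy.1.trans hyz.1, fun h : x = z =>
        hxy.2 (hxy.1.eq_of_length (hxy.1.length_le.antisymm (h ▸ hyz.1.length_le)))⟩
    · exact Or.inl (hyz ▸ hxy)
    · exact Or.inl (hxy ▸ hyz)
    · exact Or.inr ⟨hxy.trans hyz, ha, hc⟩

variable {u : ℕ → List D × (P ⊕ O)}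

theorem depth_apply_of_edge (hu : ∀ n, Edge eP eO (u n) (u (n + 1))) (h0 : depth (u 0) = 0)
    (n : ℕ) : depth (u n) = n := by
  induction n with
  | zero => exact h0
  | succ n ih => rw [(hu n).depth_eq, ih]

theorem glt_iff_lt_of_edge (hu : ∀ n, Edge eP eO (u n) (u (n + 1))) (h0 : depth (u 0) = 0)
    (m n : ℕ) : Glt (u m) (u n) ↔ m < n := by
  constructor
  · intro h
    simpa only [depth_apply_of_edge hu h0] using depth_lt_of_glt h
  · exact fun h => Nat.rel_of_forall_rel_succ_of_lt Glt (fun n => (hu n).glt) h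

theorem isPlay_range {α : Type*} {r : α → α → Prop} {u : ℕ → α} (h : ∀ n, r (u n) (u (n + 1))) :
    IsPlay r (u 0) (range u) := by
  have htrans {m n : ℕ} (hmn : m < n) : Relation.TransGen r (u m) (u n) :=
    Nat.rel_of_forall_rel_succ_of_lt _ (fun n => .single (h n)) hmn
  refine ⟨mem_range_self 0, ?_, ?_, ?_⟩
  · rintro _ ⟨n, rfl⟩
    exact Nat.rel_of_forall_rel_succ_of_le (Relation.ReflTransGen r) (fun n => .single (h n))
      n.zero_le
  · rintro _ ⟨n, rfl⟩
    exact ⟨_, mem_range_self (n + 1), h n⟩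
  · rintro _ ⟨m, rfl⟩ _ ⟨n, rfl⟩
    rcases lt_trichotomy m n with hlt | rfl | hlt
    exacts [.inl (htrans hlt), .inr (.inl rfl), .inr (.inr (htrans hlt))]

theorem depth_lt_of_transGen {u v : List D × (P ⊕ O)} (h : Relation.TransGen (Edge eP eO) u v) :
    depth u < depth v := by
  induction h with
  | single h => exact depth_lt_of_glt h.glt
  | tail _ h ih => exact ih.trans (depth_lt_of_glt h.glt)

theorem IsPlay.exists_eq_range {u₀ : List D × (P ⊕ O)} {U : Set (List D × (P ⊕ O))}
    (hU : IsPlay (Edge eP eO) u₀ U) (h0 : depth u₀ = 0) :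
    ∃ u : ℕ → List D × (P ⊕ O), u 0 = u₀ ∧ (∀ n, Edge eP eO (u n) (u (n + 1))) ∧
      U = range u := by
  obtain ⟨hu₀, -, hsucc, htotal⟩ := hU
  choose! next hnext hedge using hsucc
  let u (n : ℕ) : List D × (P ⊕ O) := next^[n] u₀
  have hu_succ (n : ℕ) : u (n + 1) = next (u n) := iterate_succ_apply' ..
  have hu_mem (n : ℕ) : u n ∈ U := by
    induction n with
    | zero => exact hu₀
    | succ n ih => rw [hu_succ]; exact hnext _ ih
  have hu_edge (n : ℕ) : Edge eP eO (u n) (u (n + 1)) := by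
    rw [hu_succ]; exact hedge _ (hu_mem n)
  refine ⟨u, rfl, hu_edge, Subset.antisymm (fun v hv => ⟨depth v, ?_⟩)
    (range_subset_iff.2 hu_mem)⟩
  have hdepth : depth (u (depth v)) = depth v := depth_apply_of_edge hu_edge h0 _
  rcases htotal v hv _ (hu_mem (depth v)) with h | h | h
  · exact absurd (depth_lt_of_transGen h) hdepth.not_gt
  · exact h.symm
  · exact absurd (depth_lt_of_transGen h) hdepth.not_lt

/-- The node at level `k` on the branch of the tree with directions `d`. -/
def branch (d : ℕ → D) (k : ℕ) : List D := (List.range k).map d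

theorem branch_succ (d : ℕ → D) (k : ℕ) : branch d (k + 1) = branch d k ++ [d k] := by
  simp only [branch, List.range_succ, List.map_append, List.map_cons, List.map_nil]

/-- The position after `n` moves of the play along the branch `d` in which Proponent is at the
labels `q` and Opponent at the labels `o`. -/
def playPosition (d : ℕ → D) (q : ℕ → P) (o : ℕ → O) (n : ℕ) : List D × (P ⊕ O) :=
  (branch d (n / 2), if Even n then Sum.inl (q (n / 2)) else Sum.inr (o (n / 2)))

theorem playPosition_even (d : ℕ → D) (q : ℕ → P) (o : ℕ → O) (k : ℕ) :
    playPosition d q o (2 * k) = (branch d k, Sum.inl (q k)) := by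
  simp [playPosition]

theorem playPosition_odd (d : ℕ → D) (q : ℕ → P) (o : ℕ → O) (k : ℕ) :
    playPosition d q o (2 * k + 1) = (branch d k, Sum.inr (o k)) := by
  simp [playPosition, parity_simps, show (2 * k + 1) / 2 = k by omega]

theorem edge_playPosition {d : ℕ → D} {q : ℕ → P} {o : ℕ → O}
    (ho : ∀ k, o k ∈ eP (branch d k, q k)) (hq : ∀ k, (d k, q (k + 1)) ∈ eO (branch d k, o k))
    (n : ℕ) : Edge eP eO (playPosition d q o n) (playPosition d q o (n + 1)) := by
  rcases Nat.even_or_odd' n with ⟨k, rfl | rfl⟩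
  · rw [playPosition_even, playPosition_odd, edge_inl_iff]
    exact ⟨o k, ho k, rfl⟩
  · rw [playPosition_odd, show 2 * k + 1 + 1 = 2 * (k + 1) by ring, playPosition_even,
      edge_inr_iff]
    exact ⟨d k, q (k + 1), hq k, by rw [branch_succ]⟩

theorem exists_eq_playPosition {p₀ : P} (hu : ∀ n, Edge eP eO (u n) (u (n + 1)))
    (h0 : u 0 = ([], Sum.inl p₀)) :
    ∃ (d : ℕ → D) (q : ℕ → P) (o : ℕ → O), u = playPosition d q o ∧ q 0 = p₀ ∧
      (∀ k, o k ∈ eP (branch d k, q k)) ∧ ∀ k, (d k, q (k + 1)) ∈ eO (branch d k, o k) := by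
  have heven (k : ℕ) : ∃ x q, u (2 * k) = (x, Sum.inl q) := by
    induction k with
    | zero => exact ⟨_, _, h0⟩
    | succ k ih =>
      obtain ⟨x, q, hk⟩ := ih
      obtain ⟨o, -, hodd⟩ := edge_inl_iff.1 (hk ▸ hu (2 * k))
      obtain ⟨d, q', -, hk'⟩ := edge_inr_iff.1 (hodd ▸ hu (2 * k + 1))
      exact ⟨_, _, hk'⟩
  choose x q heven using heven
  choose o ho hodd using fun k => edge_inl_iff.1 (heven k ▸ hu (2 * k))
  choose d q' hq hnext using fun k => edge_inr_iff.1 (hodd k ▸ hu (2 * k + 1))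
  have hstep (k : ℕ) : x (k + 1) = x k ++ [d k] ∧ q (k + 1) = q' k := by
    simpa using (heven (k + 1)).symm.trans (hnext k)
  have hinit : x 0 = [] ∧ q 0 = p₀ := by simpa using (heven 0).symm.trans h0
  have hbranch (k : ℕ) : x k = branch d k := by
    induction k with
    | zero => exact hinit.1
    | succ k ih => rw [(hstep k).1, ih, branch_succ]
  simp only [hbranch] at heven ho hodd hq
  refine ⟨d, q, o, funext fun n => ?_, hinit.2, ho, fun k => (hstep k).2 ▸ hq k⟩
  rcases Nat.even_or_odd' n with ⟨k, rfl | rfl⟩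
  · rw [heven, playPosition_even]
  · rw [hodd, playPosition_odd]

theorem isPlay_root_iff {p₀ : P} {U : Set (List D × (P ⊕ O))} :
    IsPlay (Edge eP eO) ([], Sum.inl p₀) U ↔
      ∃ (d : ℕ → D) (q : ℕ → P) (o : ℕ → O), U = range (playPosition d q o) ∧ q 0 = p₀ ∧
        (∀ k, o k ∈ eP (branch d k, q k)) ∧ ∀ k, (d k, q (k + 1)) ∈ eO (branch d k, o k) := by
  constructor
  · intro hU
    obtain ⟨u, h0, hu, rfl⟩ := hU.exists_eq_range rfl
    obtain ⟨d, q, o, rfl, h⟩ := exists_eq_playPosition hu h0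
    exact ⟨d, q, o, rfl, h⟩
  · rintro ⟨d, q, o, rfl, rfl, ho, hq⟩
    exact isPlay_range (edge_playPosition ho hq)

end Plays

/-! ### Acceptance along branches -/

section Acceptance

variable {Q Alph : Type*}

theorem par_range_iff {eP : List D × Q → Set (Q × Set (D × Q))}
    {eO : List D × (Q × Set (D × Q)) → Set (D × Q)} {u : ℕ → List D × (Q ⊕ Q × Set (D × Q))}
    (hu : ∀ n, Edge eP eO (u n) (u (n + 1))) (h0 : depth (u 0) = 0) (c : Q → ℕ) :
    Par c (range u) ↔ Parity fun n => HatC c (u n) := by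
  have hfreq (m : ℕ) : (∀ k, ∃ n > k, HatC c (u n) = m) ↔ ∃ᶠ n in atTop, HatC c (u n) = m :=
    frequently_atTop'.symm
  have hev (m : ℕ) : (∃ k, ∀ n, k < n → m ≤ HatC c (u n)) ↔ ∀ᶠ n in atTop, m ≤ HatC c (u n) :=
    (atTop_basis_Ioi.eventually_iff.trans (by simp)).symm
  simp only [Par, Parity, forall_mem_range, exists_range_iff, glt_iff_lt_of_edge hu h0, hev,
    ← hfreq, gt_iff_lt]

theorem hatC_playPosition (c : Q → ℕ) (d : ℕ → D) (q : ℕ → Q) {o : ℕ → Q × Set (D × Q)}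
    (ho : ∀ k, (o k).1 = q k) (n : ℕ) : HatC c (playPosition d q o n) = c (q (n / 2)) := by
  unfold HatC playPosition
  split_ifs <;> simp [ho]

/-- Every sequence of states from `q₀` that follows the conjunctions `g` chosen by Proponent along
some branch `d` satisfies the parity condition. -/
def IsWinningChoice (g : List D → Q → Set (D × Q)) (c : Q → ℕ) (q₀ : Q) : Prop :=
  ∀ (d : ℕ → D) (q : ℕ → Q), q 0 = q₀ → (∀ k, (d k, q (k + 1)) ∈ g (branch d k) (q k)) →
    Parity (c ∘ q)

theorem forall_isPlay_par_iff {σ : List D × Q → Q × Set (D × Q)} (hσ : ∀ p, (σ p).1 = p.2)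
    (c : Q → ℕ) (q₀ : Q) :
    (∀ U, IsPlay (Edge (fun p => {σ p}) AccEO) ([], Sum.inl q₀) U → Par c U) ↔
      IsWinningChoice (fun x q => (σ (x, q)).2) c q₀ := by
  have hpar (d : ℕ → D) (q : ℕ → Q)
      (hq : ∀ k, (d k, q (k + 1)) ∈ (σ (branch d k, q k)).2) :
      Par c (range (playPosition d q fun k => σ (branch d k, q k))) ↔ Parity (c ∘ q) := by
    have hedge : ∀ n, Edge (fun p => {σ p}) AccEO _ _ := edge_playPosition (fun _ => rfl) hq
    rw [par_range_iff hedge rfl]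
    simp only [hatC_playPosition c d q fun k => hσ (branch d k, q k)]
    exact parity_comp_div_two (c ∘ q)
  constructor
  · intro hwin d q hq0 hq
    exact (hpar d q hq).1 (hwin _ (isPlay_root_iff.2 ⟨d, q, _, rfl, hq0, fun _ => rfl, hq⟩))
  · intro hwin U hU
    obtain ⟨d, q, o, rfl, hq0, ho, hq⟩ := isPlay_root_iff.1 hU
    obtain rfl : o = fun k => σ (branch d k, q k) := funext ho
    exact (hpar d q hq).2 (hwin d q hq0 hq)

theorem accepts_iff_exists_isWinningChoice (δ : Q × Alph → Set (Set (D × Q))) (c : Q → ℕ) (q₀ : Q)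
    (F : List D → Alph) :
    Accepts δ c q₀ F ↔ ∃ g : List D → Q → Set (D × Q),
      (∀ x q, g x q ∈ δ (q, F x)) ∧ IsWinningChoice g c q₀ := by
  constructor
  · rintro ⟨σ, hσ, hwin⟩
    exact ⟨_, fun x q => (hσ (x, q)).2, (forall_isPlay_par_iff (fun p => (hσ p).1) c q₀).1 hwin⟩
  · rintro ⟨g, hg, hwin⟩
    exact ⟨fun p => (p.2, g p.1 p.2), fun p => ⟨rfl, hg p.1 p.2⟩,
      (forall_isPlay_par_iff (fun _ => rfl) c q₀).2 hwin⟩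

end Acceptance

/-! ### The simulating automaton -/

section Simulation

variable {Q Alph Y : Type*}

/-- The state changes Opponent can make by moving in direction `d` when Proponent has chosen the
conjunctions `g`. -/
def successorRel (g : Q → Set (D × Q)) (d : D) : Q → Q → Prop := fun q q' => (d, q') ∈ g q

theorem exists_tree_labelling (y₀ : Y) (next : List D → Y → D → Y) :
    ∃ ρ : List D → Y, ρ [] = y₀ ∧ ∀ x d, ρ (x ++ [d]) = next x (ρ x) d :=
  ⟨fun x => x.reverseRecOn y₀ fun x d y => next x y d, List.reverseRecOn_nil .., fun _ _ =>
    List.reverseRecOn_concat ..⟩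

theorem run_eq_label_branch {A : Type*} {st : Y → A → Y} {ρ : List D → Y} {a : List D → D → A}
    (hρ : ∀ x d, ρ (x ++ [d]) = st (ρ x) (a x d)) (d : ℕ → D) (k : ℕ) :
    run st (ρ []) (fun n => a (branch d n) (d n)) k = ρ (branch d k) := by
  induction k with
  | zero => rfl
  | succ k ih => rw [run, ih, branch_succ, hρ]

theorem eq_run {A : Type*} {st : Y → A → Y} {w : ℕ → A} {y : ℕ → Y}
    (hy : ∀ k, y (k + 1) = st (y k) (w k)) : y = run st (y 0) w := by
  funext k
  induction k with
  | zero => rfl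
  | succ k ih => rw [hy, ih, run]

namespace DetParityAutomaton

variable (M : DetParityAutomaton (Q → Q → Prop) Y) (δ : Q × Alph → Set (Set (D × Q)))

/-- The conjunction sending to each direction `d` the successor of `y` upon reading the moves in
direction `d` under `g`. -/
def conjunction (y : Y) (g : Q → Set (D × Q)) : Set (D × Y) :=
  {z | z.2 = M.step y (successorRel g z.1)}

/-- The transitions of the tree automaton that guesses at each node a conjunction for every state
of `δ`, and runs `M` on the resulting relations along every branch. -/
def treeTransition (p : Y × Alph) : Set (Set (D × Y)) :=
  {C | ∃ g : Q → Set (D × Q), (∀ q, g q ∈ δ (q, p.2)) ∧ C = M.conjunction p.1 g}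

theorem nonDet_treeTransition : NonDet (M.treeTransition δ) := by
  rintro y a _ ⟨g, -, rfl⟩ d y₁ y₂ (h₁ : y₁ = _) (h₂ : y₂ = _)
  exact h₁.trans h₂.symm

variable {M δ} {c : Q → ℕ} {q₀ : Q}

theorem autWF_treeTransition [Nonempty Q] (hδ : AutWF δ) : AutWF (M.treeTransition δ) := by
  intro y a
  choose g hg using fun q => (hδ q a).1
  obtain ⟨⟨d, -⟩, -⟩ := (hδ (Classical.arbitrary Q) a).2 _ (hg _)
  refine ⟨⟨_, g, hg, rfl⟩, ?_⟩
  rintro _ ⟨h, -, rfl⟩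
  exact ⟨(d, M.step y (successorRel h d)), rfl⟩

theorem accepts_of_accepts_treeTransition (hM : M.language = allPathsParity c q₀)
    {F : List D → Alph} (h : Accepts (M.treeTransition δ) M.color M.start F) :
    Accepts δ c q₀ F := by
  obtain ⟨G, hG, hwin⟩ := (accepts_iff_exists_isWinningChoice ..).1 h
  choose g hg hGg using hG
  obtain ⟨ρ, hρ0, hρ⟩ := exists_tree_labelling M.start
    fun x y d => M.step y (successorRel (g x y) d)
  refine (accepts_iff_exists_isWinningChoice ..).2
    ⟨fun x => g x (ρ x), fun x => hg x (ρ x), fun d q hq0 hq => ?_⟩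
  let w (k : ℕ) : Q → Q → Prop := successorRel (g (branch d k) (ρ (branch d k))) (d k)
  have hrun (k : ℕ) : run M.step M.start w k = ρ (branch d k) := by
    rw [← hρ0]
    exact run_eq_label_branch (a := fun x => successorRel (g x (ρ x))) hρ d k
  have hw : w ∈ M.language := by
    refine hwin d (run M.step M.start w) rfl fun k => ?_
    rw [hGg, hrun k]
    exact congrArg (M.step · (w k)) (hrun k)
  rw [hM] at hw
  exact hw q hq0 hq

theorem accepts_treeTransition_of_accepts (hM : M.language = allPathsParity c q₀)
    {F : List D → Alph} (h : Accepts δ c q₀ F) :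
    Accepts (M.treeTransition δ) M.color M.start F := by
  obtain ⟨g, hg, hwin⟩ := (accepts_iff_exists_isWinningChoice ..).1 h
  refine (accepts_iff_exists_isWinningChoice ..).2
    ⟨fun x y => M.conjunction y (g x), fun x y => ⟨g x, hg x, rfl⟩, fun d y hy0 hy => ?_⟩
  let w (k : ℕ) : Q → Q → Prop := successorRel (g (branch d k)) (d k)
  have hw : w ∈ M.language := hM ▸ hwin d
  rw [eq_run (st := M.step) (w := w) hy, hy0]
  exact hw

end DetParityAutomaton

end Simulation

theorem simulation_general {Alph : Type*} {Q : Type u} [Finite Q]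
    (δ : Q × Alph → Set (Set (D × Q))) (c : Q → ℕ) (q₀ : Q) (hA : AutWF δ) :
    ∃ (Q' : Type u) (_ : Fintype Q') (_ : Nonempty Q')
      (δ' : Q' × Alph → Set (Set (D × Q'))) (c' : Q' → ℕ) (q₀' : Q'),
      AutWF δ' ∧ NonDet δ' ∧
      ∀ F : List D → Alph, Accepts δ' c' q₀' F ↔ Accepts δ c q₀ F := by
  have : Nonempty Q := ⟨q₀⟩
  obtain ⟨Y, _, M, hM⟩ := exists_detParityAutomaton_allPathsParity c q₀
  exact ⟨Y, Fintype.ofFinite Y, ⟨M.start⟩, M.treeTransition δ, M.color, M.start,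
    M.autWF_treeTransition hA, M.nonDet_treeTransition δ, fun F =>
      ⟨M.accepts_of_accepts_treeTransition hM, M.accepts_treeTransition_of_accepts hM⟩⟩

theorem simulation {Alph : Type*} {Q : Type} [Fintype D] [Nonempty D]
    [Fintype Alph] [Nonempty Alph] [Fintype Q] [Nonempty Q]
    (δ : Q × Alph → Set (Set (D × Q))) (c : Q → ℕ) (q₀ : Q) (hA : AutWF δ) :
    ∃ (Q' : Type) (_ : Fintype Q') (_ : Nonempty Q')
      (δ' : Q' × Alph → Set (Set (D × Q'))) (c' : Q' → ℕ) (q₀' : Q'),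
      AutWF δ' ∧ NonDet δ' ∧
      ∀ F : List D → Alph, Accepts δ' c' q₀' F ↔ Accepts δ c q₀ F :=
  simulation_general δ c q₀ hA

end TreeGames
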